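/- Let r ∈ ℕ with r ≥ 2, n ∈ ℕ, and m = (m₁, …, m_n) ∈ ℕⁿ with gcd(m_i, r) = 1 for all i, and for each i let m_i⁻¹ denote an integer representing the multiplicative inverse of m_i modulo r. In the graph L_{2n−1} ×_m ℤ_r, for each i with i + 3 ≤ n, the number of 3-step 0-simple paths from (v_i, 0) to (v_{i+3}, 0) is congruent to −m_{i+2}⁻¹ m_{i+1} · (r(r−1)(r−2)/3) modulo r; consequently the total number of 0-simple paths from (v_i, 0) to (v_{i+3}, 0) is congruent to −m_{i+2}⁻¹ m_{i+1} · (r(r−1)(r−2)/3) modulo r. -/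

import Mathlib

namespace QL

/-- Edges of the graph `L_{2n−1} ×_m ℤ_r`: a pair `(i,j)` with `i ≤ j` (the edge
`e_{i,j}` of `L_{2n−1}`) together with an element `k` of `ℤ_r`. -/
abbrev Edge (n r : ℕ) := {p : Fin n × Fin n // p.1 ≤ p.2} × ZMod r

/-- The source of the edge `(e_{i,j}, k)` is `(v_i, k − m_i)`. -/
def esrc (n r : ℕ) (m : Fin n → ℕ) (e : Edge n r) : Fin n × ZMod r :=
  (e.1.1.1, e.2 - (m e.1.1.1 : ZMod r))

/-- The range of the edge `(e_{i,j}, k)` is `(v_j, k)`. -/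
def ern (n r : ℕ) (e : Edge n r) : Fin n × ZMod r :=
  (e.1.1.2, e.2)

/-- A list of edges is a path if consecutive edges are composable. -/
def IsQPath (n r : ℕ) (m : Fin n → ℕ) (p : List (Edge n r)) : Prop :=
  List.Chain' (fun e f => ern n r e = esrc n r m f) p

/-- A path `(e_{i₁,j₁},k₁)⋯(e_{i_ℓ,j_ℓ},k_ℓ)` is `0`-simple if `k₁ = m_{i₁}`,
`k_a ≠ 0` for `a ≠ ℓ` and `k_ℓ = 0`. -/
def ZeroSimple (n r : ℕ) (m : Fin n → ℕ) (p : List (Edge n r)) : Prop :=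
  ∃ h : p ≠ [], IsQPath n r m p ∧
    (p.head h).2 = (m (p.head h).1.1.1 : ZMod r) ∧
    (∀ e ∈ p.dropLast, e.2 ≠ (0 : ZMod r)) ∧
    (p.getLast h).2 = 0

/-- A `0`-simple path is `k`-step if there are indices `t₁ < ⋯ < t_{k+1}` starting at
the source index and ending at the final range index, such that every edge of the path
has its range among the columns `t_q`, and every interior column `t_q` (`2 ≤ q ≤ k`) is
actually visited. -/
def KStep (n r : ℕ) (k : ℕ) (p : List (Edge n r)) : Prop :=
  ∃ (h : p ≠ []) (t : Fin (k + 1) → Fin n), StrictMono t ∧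
    t 0 = (p.head h).1.1.1 ∧ t (Fin.last k) = (p.getLast h).1.1.2 ∧
    (∀ e ∈ p, ∃ q : Fin (k + 1), (e : Edge n r).1.1.2 = t q) ∧
    ∀ q : Fin (k + 1), 0 < (q : ℕ) → (q : ℕ) < k → ∃ e ∈ p, (e : Edge n r).1.1.2 = t q

end QL

/-!
Sort the paths by their itinerary, the increasing list of columns they visit. In a column `j` the
height grows by `m_j` at every edge, so a path which enters `j` at height `-m_j s`, `0 ≤ s < r`, can
leave it exactly at the heights `-m_j t` with `t < s` without meeting height `0`, and a path which
starts at height `0` can leave its first column at every height. Hence counting along an itinerary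
is iterated summation. For the itinerary `i, i+1, i+2, i+3` it gives modulo `r` the double sum
`∑_{t < s < r} m_{i+2}⁻¹ m_{i+1} t = m_{i+2}⁻¹ m_{i+1} (r choose 3)`, and
`(r choose 3) ≡ -r(r-1)(r-2)/3` because `r` divides `3 (r choose 3)`. The other itineraries from `i`
to `i+3` carry `r`, `(r choose 2)` and `(r choose 2)` paths, which add up to `r²`.
-/

namespace QL

variable {n r : ℕ} {m : Fin n → ℕ} {l : List (Fin n)} {p : List (Edge n r)}

theorem isQPath_cons_cons {e f : Edge n r} :
    IsQPath n r m (e :: f :: p) ↔ ern n r e = esrc n r m f ∧ IsQPath n r m (f :: p) :=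
  List.isChain_cons_cons

/-- The sequence of columns of the vertices of a path, its starting vertex included. -/
def columns : List (Edge n r) → List (Fin n)
  | [] => []
  | e :: p => e.1.1.1 :: (e :: p).map fun f => f.1.1.2

/-- The itinerary of a path: the distinct columns it visits, in the order of the visit. -/
def itinerary (p : List (Edge n r)) : List (Fin n) :=
  (columns p).destutter (· ≠ ·)

theorem columns_cons_cons {e f : Edge n r} (h : IsQPath n r m (e :: f :: p)) :
    columns (e :: f :: p) = e.1.1.1 :: columns (f :: p) := by
  have hef : e.1.1.2 = f.1.1.1 := congrArg Prod.fst (isQPath_cons_cons.1 h).1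
  simp only [columns, List.map_cons, hef]

theorem sortedLE_columns (hp : IsQPath n r m p) : (columns p).SortedLE := by
  rw [List.sortedLE_iff_isChain]
  induction p with
  | nil => exact .nil
  | cons e p ih =>
    cases p with
    | nil => exact List.isChain_pair.2 e.1.2
    | cons f p =>
      have hef : e.1.1.2 = f.1.1.1 := congrArg Prod.fst (isQPath_cons_cons.1 hp).1
      rw [columns_cons_cons hp]
      exact List.isChain_cons_cons.2 ⟨hef ▸ e.1.2, ih (isQPath_cons_cons.1 hp).2⟩

theorem itinerary_eq_dedup (hp : IsQPath n r m p) : itinerary p = (columns p).dedup :=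
  (sortedLE_columns hp).pairwise.destutter_eq_dedup

theorem sortedLT_itinerary (hp : IsQPath n r m p) : (itinerary p).SortedLT := by
  rw [itinerary_eq_dedup hp, List.sortedLT_iff_nodup_and_sortedLE]
  exact ⟨List.nodup_dedup _,
    ((sortedLE_columns hp).pairwise.sublist (List.dedup_sublist _)).sortedLE⟩

theorem mem_itinerary (hp : IsQPath n r m p) (h : p ≠ []) {c : Fin n} :
    c ∈ itinerary p ↔ c = (p.head h).1.1.1 ∨ ∃ e ∈ p, e.1.1.2 = c := by
  rw [itinerary_eq_dedup hp, List.mem_dedup]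
  cases p with
  | nil => exact absurd rfl h
  | cons e p => simp only [columns, List.mem_cons, List.mem_map, List.head_cons]

theorem isLeast_itinerary (hp : IsQPath n r m p) (h : p ≠ []) :
    IsLeast {c | c ∈ itinerary p} (p.head h).1.1.1 := by
  refine ⟨(mem_itinerary hp h).2 (.inl rfl), fun c hc => ?_⟩
  rw [Set.mem_ofPred_eq, itinerary_eq_dedup hp, List.mem_dedup] at hc
  cases p with
  | nil => exact absurd rfl h
  | cons e p => exact (sortedLE_columns hp).pairwise.rel_head hc

theorem isGreatest_itinerary (hp : IsQPath n r m p) (h : p ≠ []) :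
    IsGreatest {c | c ∈ itinerary p} (p.getLast h).1.1.2 := by
  refine ⟨(mem_itinerary hp h).2 (.inr ⟨_, List.getLast_mem h, rfl⟩), fun c hc => ?_⟩
  rw [Set.mem_ofPred_eq, itinerary_eq_dedup hp, List.mem_dedup] at hc
  cases p with
  | nil => exact absurd rfl h
  | cons e p =>
    have hlast : (columns (e :: p)).getLast (List.cons_ne_nil _ _) = ((e :: p).getLast h).1.1.2 :=
      List.getLast_cons_cons.trans
        (List.getLast_map (f := fun f : Edge n r => f.1.1.2) (l := e :: p) (by simp))
    exact hlast ▸ (sortedLE_columns hp).pairwise.rel_getLast hc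

theorem kStep_iff_itinerary_eq_ofFn (hp : IsQPath n r m p) (h : p ≠ []) {k : ℕ} :
    KStep n r k p ↔ ∃ t : Fin (k + 1) → Fin n, StrictMono t ∧ itinerary p = List.ofFn t := by
  constructor
  · rintro ⟨_, t, ht, ht_head, ht_last, hrange, hvisit⟩
    refine ⟨t, ht, (sortedLT_itinerary hp).eq_of_mem_iff ht.sortedLT_ofFn fun c => ?_⟩
    rw [mem_itinerary hp h, List.mem_ofFn]
    constructor
    · rintro (rfl | ⟨e, he, rfl⟩)
      · exact ⟨0, ht_head⟩
      · exact (hrange e he).imp fun q hq => hq.symm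
    · rintro ⟨q, rfl⟩
      rcases eq_or_ne q 0 with rfl | hq
      · exact .inl ht_head
      rcases eq_or_ne q (Fin.last k) with rfl | hq'
      · exact .inr ⟨_, List.getLast_mem h, ht_last.symm⟩
      · exact .inr (hvisit q (Fin.pos_iff_ne_zero.2 hq) (Fin.lt_last_iff_ne_last.2 hq'))
  · rintro ⟨t, ht, hpt⟩
    have hmem (c : Fin n) : c ∈ itinerary p ↔ ∃ q, t q = c := by rw [hpt, List.mem_ofFn]
    have ht_head : t 0 = (p.head h).1.1.1 := by
      refine IsLeast.unique ⟨(hmem _).2 ⟨0, rfl⟩, fun c hc => ?_⟩ (isLeast_itinerary hp h)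
      obtain ⟨q, rfl⟩ := (hmem c).1 hc
      exact ht.monotone (Fin.zero_le q)
    have ht_last : t (Fin.last k) = (p.getLast h).1.1.2 := by
      refine IsGreatest.unique ⟨(hmem _).2 ⟨_, rfl⟩, fun c hc => ?_⟩ (isGreatest_itinerary hp h)
      obtain ⟨q, rfl⟩ := (hmem c).1 hc
      exact ht.monotone (Fin.le_last q)
    refine ⟨h, t, ht, ht_head, ht_last, fun e he => ?_, fun q hq _ => ?_⟩
    · exact ((hmem _).1 ((mem_itinerary hp h).2 (.inr ⟨e, he, rfl⟩))).imp fun q hq => hq.symm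
    · refine ((mem_itinerary hp h).1 ((hmem _).2 ⟨q, rfl⟩)).resolve_left ?_
      rw [← ht_head]
      exact (ht (Fin.pos_iff_ne_zero.2 (by rintro rfl; exact hq.false))).ne'

theorem kStep_iff_length_itinerary (hp : IsQPath n r m p) (h : p ≠ []) {k : ℕ} :
    KStep n r k p ↔ (itinerary p).length = k + 1 := by
  rw [kStep_iff_itinerary_eq_ofFn hp h]
  constructor
  · rintro ⟨t, -, ht⟩
    rw [ht, List.length_ofFn]
  · intro hk
    exact ⟨fun q => (itinerary p).get (q.cast hk.symm),
      (sortedLT_itinerary hp).strictMono_get.comp (Fin.cast_strictMono hk.symm),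
      (List.ofFn_congr hk.symm _).symm ▸ (List.ofFn_get _).symm⟩

theorem head?_itinerary_cons (e : Edge n r) (p : List (Edge n r)) :
    (itinerary (e :: p)).head? = some e.1.1.1 := by
  have (a : Fin n) (l : List (Fin n)) : (l.destutter' (· ≠ ·) a).head? = some a := by
    induction l with
    | nil => rfl
    | cons b l ih =>
      rw [List.destutter'_cons]
      split_ifs
      exacts [rfl, ih]
  exact this _ _

theorem itinerary_singleton (e : Edge n r) :
    itinerary [e] = if e.1.1.1 = e.1.1.2 then [e.1.1.2] else [e.1.1.1, e.1.1.2] := by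
  rw [itinerary, columns, List.map_singleton, List.destutter_pair]
  split_ifs <;> simp_all

theorem itinerary_cons_cons {e f : Edge n r} (h : IsQPath n r m (e :: f :: p)) :
    itinerary (e :: f :: p) =
      if e.1.1.1 = e.1.1.2 then itinerary (f :: p) else e.1.1.1 :: itinerary (f :: p) := by
  have hef : e.1.1.2 = f.1.1.1 := congrArg Prod.fst (isQPath_cons_cons.1 h).1
  rw [itinerary, columns_cons_cons h, itinerary, columns, List.destutter_cons_cons, hef,
    List.destutter_cons', ite_not]
  split_ifs with he
  · rw [he]
  · rfl

/-- The paths which start at height `x : ZMod r` and reach height `0` for the first time at their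
end. For `x = 0` these are the `0`-simple paths. -/
def returnPaths (m : Fin n → ℕ) (x : ZMod r) : Set (List (Edge n r)) :=
  {p | ∃ h : p ≠ [], IsQPath n r m p ∧ (esrc n r m (p.head h)).2 = x ∧
    (∀ e ∈ p.dropLast, e.2 ≠ 0) ∧ (p.getLast h).2 = 0}

/-- The paths in `returnPaths m x` with itinerary `l`. -/
def pathsThrough (m : Fin n → ℕ) (l : List (Fin n)) (x : ZMod r) : Set (List (Edge n r)) :=
  {p ∈ returnPaths m x | itinerary p = l}

/-- The ways to complete a partial path that has just reached height `x` in the first column of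
`l`. At height `0` the path must stop, which is allowed only in the last column. -/
def continuations (m : Fin n → ℕ) (l : List (Fin n)) (x : ZMod r) : Set (List (Edge n r)) :=
  {p | if x = 0 then p = [] ∧ l.length = 1 else p ∈ pathsThrough m l x}

theorem zeroSimple_iff_mem_returnPaths : ZeroSimple n r m p ↔ p ∈ returnPaths m 0 := by
  simp only [ZeroSimple, returnPaths, esrc, sub_eq_zero, Set.mem_ofPred_eq]

theorem nil_notMem_returnPaths (x : ZMod r) : [] ∉ returnPaths m x :=
  fun h => h.1 rfl

theorem singleton_mem_returnPaths {e : Edge n r} {x : ZMod r} :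
    [e] ∈ returnPaths m x ↔ (esrc n r m e).2 = x ∧ e.2 = 0 := by
  have he : IsQPath n r m [e] := List.isChain_singleton e
  simp [returnPaths, he]

theorem cons_cons_mem_returnPaths {e f : Edge n r} {x : ZMod r} :
    e :: f :: p ∈ returnPaths m x ↔ (esrc n r m e).2 = x ∧ ern n r e = esrc n r m f ∧
      e.2 ≠ 0 ∧ f :: p ∈ returnPaths m e.2 := by
  have hef (h : ern n r e = esrc n r m f) : (esrc n r m f).2 = e.2 := congrArg Prod.snd h.symm
  simp only [returnPaths, isQPath_cons_cons, Set.mem_ofPred_eq, List.head_cons, ne_eq,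
    reduceCtorEq, not_false_eq_true, exists_true_left, List.dropLast_cons_cons,
    List.forall_mem_cons, List.getLast_cons_cons]
  tauto

theorem nil_mem_continuations {x : ZMod r} :
    [] ∈ continuations m l x ↔ x = 0 ∧ l.length = 1 := by
  simp [continuations, pathsThrough, nil_notMem_returnPaths]

theorem cons_mem_continuations {e : Edge n r} {x : ZMod r} :
    e :: p ∈ continuations m l x ↔ x ≠ 0 ∧ e :: p ∈ pathsThrough m l x := by
  simp [continuations]

theorem cons_mem_pathsThrough {e : Edge n r} {j : Fin n} {x : ZMod r} :
    e :: p ∈ pathsThrough m (j :: l) x ↔ esrc n r m e = (j, x) ∧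
      (e.1.1.2 = j ∧ p ∈ continuations m (j :: l) e.2 ∨
        e.1.1.2 ≠ j ∧ l.head? = some e.1.1.2 ∧ p ∈ continuations m l e.2) := by
  have hsrc : esrc n r m e = (j, x) ↔ e.1.1.1 = j ∧ (esrc n r m e).2 = x := Prod.ext_iff
  rw [hsrc, pathsThrough, Set.mem_ofPred_eq]
  cases p with
  | nil =>
    rw [singleton_mem_returnPaths, itinerary_singleton, nil_mem_continuations,
      nil_mem_continuations]
    rcases l with _ | ⟨a, _ | ⟨b, l⟩⟩ <;> grind
  | cons f p =>
    simp only [cons_cons_mem_returnPaths, cons_mem_continuations, pathsThrough, Set.mem_ofPred_eq]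
    have hhead := head?_itinerary_cons f p
    have hef : ern n r e = esrc n r m f ↔ e.1.1.2 = f.1.1.1 ∧ e.2 = (esrc n r m f).2 :=
      Prod.ext_iff
    have hf (h : f :: p ∈ returnPaths m e.2) : (esrc n r m f).2 = e.2 := h.2.2.1
    have hit (h : ern n r e = esrc n r m f) (h' : f :: p ∈ returnPaths m e.2) :=
      itinerary_cons_cons (isQPath_cons_cons.2 ⟨h, h'.2.1⟩)
    grind

theorem pathsThrough_singleton (j : Fin n) (x : ZMod r) :
    pathsThrough m [j] x =
      List.cons (⟨(j, j), le_rfl⟩, x + m j) '' continuations m [j] (x + m j) := by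
  ext p
  cases p with
  | nil => simp [pathsThrough, nil_notMem_returnPaths]
  | cons e p =>
    obtain ⟨⟨⟨a, b⟩, hab⟩, y⟩ := e
    simp only [cons_mem_pathsThrough, esrc, Prod.mk.injEq, sub_eq_iff_eq_add, ne_eq,
      List.head?_nil, reduceCtorEq, false_and, and_false, or_false, Set.mem_image,
      List.cons.injEq, Subtype.mk.injEq, exists_eq_right_right]
    grind

theorem pathsThrough_cons_cons {j j' : Fin n} (hj : j < j') (l : List (Fin n)) (x : ZMod r) :
    pathsThrough m (j :: j' :: l) x =
      List.cons (⟨(j, j), le_rfl⟩, x + m j) '' continuations m (j :: j' :: l) (x + m j) ∪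
      List.cons (⟨(j, j'), hj.le⟩, x + m j) '' continuations m (j' :: l) (x + m j) := by
  ext p
  cases p with
  | nil => simp [pathsThrough, nil_notMem_returnPaths]
  | cons e p =>
    obtain ⟨⟨⟨a, b⟩, hab⟩, y⟩ := e
    simp only [cons_mem_pathsThrough, esrc, Prod.mk.injEq, sub_eq_iff_eq_add, ne_eq,
      List.head?_cons, Option.some.injEq, Set.mem_union, Set.mem_image, List.cons.injEq,
      Subtype.mk.injEq, exists_eq_right_right]
    grind

theorem encard_pathsThrough_singleton (j : Fin n) (x : ZMod r) :
    (pathsThrough m [j] x).encard = (continuations m [j] (x + (m j : ZMod r))).encard := by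
  rw [pathsThrough_singleton, List.cons_injective.encard_image]

theorem encard_pathsThrough_cons_cons {j j' : Fin n} (hj : j < j') (l : List (Fin n))
    (x : ZMod r) :
    (pathsThrough m (j :: j' :: l) x).encard =
      (continuations m (j :: j' :: l) (x + (m j : ZMod r))).encard +
        (continuations m (j' :: l) (x + (m j : ZMod r))).encard := by
  rw [pathsThrough_cons_cons hj, Set.encard_union_eq, List.cons_injective.encard_image,
    List.cons_injective.encard_image]
  rw [Set.disjoint_left]
  rintro - ⟨p, -, rfl⟩ ⟨q, -, h⟩
  simp only [List.cons.injEq, Prod.mk.injEq, Subtype.mk.injEq] at h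
  exact hj.ne' h.1.1.2

theorem continuations_of_ne_zero {x : ZMod r} (hx : x ≠ 0) :
    continuations m l x = pathsThrough m l x := by
  simp only [continuations, if_neg hx, Set.ofPred_mem_eq]

theorem continuations_singleton_zero (j : Fin n) :
    continuations m [j] (0 : ZMod r) = {[]} := by
  simp [continuations]

theorem continuations_cons_cons_zero (j j' : Fin n) (l : List (Fin n)) :
    continuations m (j :: j' :: l) (0 : ZMod r) = ∅ := by
  simp [continuations]

theorem sum_range_natCast [NeZero r] {M : Type*} [AddCommMonoid M] (f : ZMod r → M) :
    ∑ s ∈ Finset.range r, f s = ∑ y, f y :=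
  Finset.sum_nbij' (fun s => (s : ZMod r)) ZMod.val (by simp) (by simp [ZMod.val_lt])
    (fun s hs => ZMod.val_cast_of_lt (Finset.mem_range.1 hs)) (by simp) (by simp)

theorem sum_range_neg_mul [NeZero r] {M : Type*} [AddCommMonoid M] {a : ZMod r} (ha : IsUnit a)
    (f : ZMod r → M) : ∑ s ∈ Finset.range r, f (-(a * s)) = ∑ y, f y := by
  obtain ⟨u, rfl⟩ := ha
  rw [sum_range_natCast fun y : ZMod r => f (-((u : ZMod r) * y))]
  exact ((Units.mulLeft u).trans (Equiv.neg _)).sum_comp f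

theorem exists_lt_eq_neg_mul [NeZero r] {a : ZMod r} (ha : IsUnit a) (y : ZMod r) :
    ∃ s < r, y = -(a * (s : ℕ)) := by
  obtain ⟨u, rfl⟩ := ha
  exact ⟨(-(↑u⁻¹ * y)).val, ZMod.val_lt _, by simp⟩

theorem neg_mul_natCast_ne_zero {a : ZMod r} (ha : IsUnit a) {s : ℕ} (hs : s ≠ 0) (hsr : s < r) :
    -(a * s) ≠ 0 := by
  rw [neg_ne_zero, Ne, ha.mul_right_eq_zero, ZMod.natCast_eq_zero_iff]
  exact Nat.not_dvd_of_pos_of_lt hs.pos hsr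

theorem neg_mul_add_one_add (a s : ZMod r) : -(a * (s + 1)) + a = -(a * s) := by ring

theorem encard_continuations_singleton [NeZero r] {j : Fin n} (hm : IsUnit (m j : ZMod r))
    (x : ZMod r) : (continuations m [j] x).encard = 1 := by
  obtain ⟨s, hs, rfl⟩ := exists_lt_eq_neg_mul hm x
  induction s with
  | zero => simp [continuations_singleton_zero]
  | succ s ih =>
    rw [continuations_of_ne_zero (neg_mul_natCast_ne_zero hm s.succ_ne_zero hs),
      encard_pathsThrough_singleton, Nat.cast_succ, neg_mul_add_one_add, ih (by omega)]

theorem encard_continuations_cons_cons {j j' : Fin n} (hj : j < j') (hm : IsUnit (m j : ZMod r))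
    (l : List (Fin n)) {s : ℕ} (hs : s < r) :
    (continuations m (j :: j' :: l) (-(m j * s : ZMod r))).encard =
      ∑ t ∈ Finset.range s, (continuations m (j' :: l) (-(m j * t : ZMod r))).encard := by
  induction s with
  | zero => simp [continuations_cons_cons_zero]
  | succ s ih =>
    rw [continuations_of_ne_zero (neg_mul_natCast_ne_zero hm s.succ_ne_zero hs),
      encard_pathsThrough_cons_cons hj, Nat.cast_succ, neg_mul_add_one_add, ih (by omega),
      Finset.sum_range_succ]

theorem encard_pathsThrough_zero [NeZero r] {j j' : Fin n} (hj : j < j')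
    (hm : IsUnit (m j : ZMod r)) (l : List (Fin n)) :
    (pathsThrough m (j :: j' :: l) (0 : ZMod r)).encard =
      ∑ y : ZMod r, (continuations m (j' :: l) y).encard := by
  obtain ⟨s, rfl⟩ := Nat.exists_eq_add_one_of_ne_zero (NeZero.ne r)
  have hx : (0 : ZMod (s + 1)) = -(m j * (s + 1 : ℕ)) := by simp
  rw [hx, encard_pathsThrough_cons_cons hj, Nat.cast_succ, neg_mul_add_one_add,
    encard_continuations_cons_cons hj hm l s.lt_succ_self, ← Finset.sum_range_succ,
    sum_range_neg_mul hm fun y => (continuations m (j' :: l) y).encard]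

theorem encard_continuations_pair [NeZero r] {j j' : Fin n} (hj : j < j')
    (hm : IsUnit (m j : ZMod r)) (hm' : IsUnit (m j' : ZMod r)) (x : ZMod r) :
    (continuations m [j, j'] x).encard = (-((m j : ZMod r)⁻¹ * x)).val := by
  obtain ⟨s, hs, rfl⟩ := exists_lt_eq_neg_mul hm x
  rw [encard_continuations_cons_cons hj hm [] hs]
  simp [encard_continuations_singleton hm', ← mul_assoc, ZMod.inv_mul_of_unit _ hm,
    ZMod.val_cast_of_lt hs]

theorem sum_range_choose_right (k s : ℕ) :
    ∑ t ∈ Finset.range s, t.choose k = s.choose (k + 1) := by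
  induction s with
  | zero => simp
  | succ s ih => rw [Finset.sum_range_succ, ih, Nat.choose_succ_succ', add_comm]

theorem encard_pathsThrough_pair [NeZero r] {i j : Fin n} (hij : i < j)
    (hi : IsUnit (m i : ZMod r)) (hj : IsUnit (m j : ZMod r)) :
    (pathsThrough m [i, j] (0 : ZMod r)).encard = r := by
  simp [encard_pathsThrough_zero hij hi, encard_continuations_singleton hj]

theorem encard_pathsThrough_triple [NeZero r] {i j k : Fin n} (hij : i < j) (hjk : j < k)
    (hi : IsUnit (m i : ZMod r)) (hj : IsUnit (m j : ZMod r)) (hk : IsUnit (m k : ZMod r)) :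
    (pathsThrough m [i, j, k] (0 : ZMod r)).encard = r.choose 2 := by
  rw [encard_pathsThrough_zero hij hi, ← sum_range_neg_mul hj]
  calc ∑ s ∈ Finset.range r, (continuations m [j, k] (-(m j * s : ZMod r))).encard
    _ = ∑ s ∈ Finset.range r, (s.choose 1 : ℕ∞) := Finset.sum_congr rfl fun s hs => by
        simp [encard_continuations_cons_cons hjk hj [] (Finset.mem_range.1 hs),
          encard_continuations_singleton hk]
    _ = r.choose 2 := mod_cast sum_range_choose_right 1 r

theorem encard_pathsThrough_quadruple [NeZero r] {i a b j : Fin n} (hia : i < a) (hab : a < b)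
    (hbj : b < j) (hi : IsUnit (m i : ZMod r)) (ha : IsUnit (m a : ZMod r))
    (hb : IsUnit (m b : ZMod r)) (hj : IsUnit (m j : ZMod r)) :
    (pathsThrough m [i, a, b, j] (0 : ZMod r)).encard =
      (∑ s ∈ Finset.range r, ∑ t ∈ Finset.range s, ((m b : ZMod r)⁻¹ * m a * t).val : ℕ) := by
  rw [encard_pathsThrough_zero hia hi, ← sum_range_neg_mul ha]
  push_cast
  refine Finset.sum_congr rfl fun s hs => ?_
  rw [encard_continuations_cons_cons hab ha [j] (Finset.mem_range.1 hs)]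
  refine Finset.sum_congr rfl fun t _ => ?_
  rw [encard_continuations_pair hbj hb hj, mul_neg, neg_neg, mul_assoc]

theorem sum_range_sum_range_id (k : ℕ) :
    ∑ s ∈ Finset.range k, ∑ t ∈ Finset.range s, t = k.choose 3 := by
  simp only [Finset.sum_range_id, ← Nat.choose_two_right, sum_range_choose_right]

theorem natCast_ncard_pathsThrough_quadruple [NeZero r] {i a b j : Fin n} (hia : i < a)
    (hab : a < b) (hbj : b < j) (hi : IsUnit (m i : ZMod r)) (ha : IsUnit (m a : ZMod r))
    (hb : IsUnit (m b : ZMod r)) (hj : IsUnit (m j : ZMod r)) :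
    ((pathsThrough m [i, a, b, j] (0 : ZMod r)).ncard : ZMod r) =
      (m b : ZMod r)⁻¹ * m a * r.choose 3 := by
  rw [Set.ncard_def, encard_pathsThrough_quadruple hia hab hbj hi ha hb hj, ENat.toNat_natCast,
    ← sum_range_sum_range_id]
  simp only [Nat.cast_sum, ZMod.natCast_zmod_val, Finset.mul_sum]

theorem natCast_choose_three_eq_neg {c : ℤ} (hc : 3 * c = (r : ℤ) * (r - 1) * (r - 2)) :
    (r.choose 3 : ZMod r) = -c := by
  have hdesc : (r : ℤ) * (r - 1) * (r - 2) = 6 * r.choose 3 := by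
    have h := descPochhammer_eval_eq_descFactorial ℤ r 3
    rw [Nat.descFactorial_eq_factorial_mul_choose] at h
    simpa [descPochhammer_succ_right, Nat.factorial] using h
  have hchoose : c = 2 * r.choose 3 := by linarith
  have hzero : (r.choose 3 : ZMod r) * 3 = 0 := by
    cases r with
    | zero => simp
    | succ k =>
      have h := congrArg (Nat.cast (R := ZMod (k + 1))) (Nat.add_one_mul_choose_eq k 2)
      rw [Nat.cast_mul, ZMod.natCast_self, zero_mul] at h
      exact_mod_cast h.symm
  rw [hchoose]
  push_cast
  linear_combination hzero

theorem add_two_mul_choose_two (k : ℕ) : k + 2 * k.choose 2 = k ^ 2 := by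
  rw [Nat.choose_two_right, Nat.mul_div_cancel' (Nat.even_mul_pred_self k).two_dvd]
  cases k with
  | zero => rfl
  | succ k => rw [Nat.add_sub_cancel]; ring

/-- The `0`-simple paths from `(v_i, 0)` to `(v_j, 0)`. -/
def zeroSimplePaths (r : ℕ) (m : Fin n → ℕ) (i j : Fin n) : Set (List (Edge n r)) :=
  {p | ∃ h : p ≠ [], ZeroSimple n r m p ∧ esrc n r m (p.head h) = (i, 0) ∧
    ern n r (p.getLast h) = (j, 0)}

/-- The `k`-step `0`-simple paths from `(v_i, 0)` to `(v_j, 0)`. -/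
def kStepPaths (r : ℕ) (m : Fin n → ℕ) (k : ℕ) (i j : Fin n) : Set (List (Edge n r)) :=
  {p | ∃ h : p ≠ [], ZeroSimple n r m p ∧ KStep n r k p ∧ esrc n r m (p.head h) = (i, 0) ∧
    ern n r (p.getLast h) = (j, 0)}

theorem mem_zeroSimplePaths {i j : Fin n} :
    p ∈ zeroSimplePaths r m i j ↔ p ∈ returnPaths m 0 ∧
      IsLeast {c | c ∈ itinerary p} i ∧ IsGreatest {c | c ∈ itinerary p} j := by
  simp only [zeroSimplePaths, Set.mem_ofPred_eq, zeroSimple_iff_mem_returnPaths]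
  constructor
  · rintro ⟨h, hp, hi, hj⟩
    obtain rfl : _ = i := congrArg Prod.fst hi
    obtain rfl : _ = j := congrArg Prod.fst hj
    exact ⟨hp, isLeast_itinerary hp.2.1 h, isGreatest_itinerary hp.2.1 h⟩
  · rintro ⟨hp, hi, hj⟩
    obtain ⟨h, hpath, hsrc, -, hlast⟩ := id hp
    exact ⟨h, hp, Prod.ext ((isLeast_itinerary hpath h).unique hi) hsrc,
      Prod.ext ((isGreatest_itinerary hpath h).unique hj) hlast⟩

theorem eq_or_of_isLeast_of_isGreatest {α : Type*} [LinearOrder α] {i a b j : α} (hia : i ⋖ a)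
    (hab : a ⋖ b) (hbj : b ⋖ j) {l : List α} (hl : l.SortedLT) (hi : IsLeast {c | c ∈ l} i)
    (hj : IsGreatest {c | c ∈ l} j) :
    l = [i, j] ∨ l = [i, a, j] ∨ l = [i, b, j] ∨ l = [i, a, b, j] := by
  have hia' := hia.lt
  have hab' := hab.lt
  have hbj' := hbj.lt
  have hil : i ∈ l := hi.1
  have hjl : j ∈ l := hj.1
  have hmem (c : α) (hc : c ∈ l) : c = i ∨ c = a ∨ c = b ∨ c = j := by
    by_contra! h
    have hcb : c ≤ b := hbj.le_of_lt ((hj.2 hc).lt_of_ne h.2.2.2)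
    have hca : c ≤ a := hab.le_of_lt (hcb.lt_of_ne h.2.2.1)
    have hci : c ≤ i := hia.le_of_lt (hca.lt_of_ne h.2.1)
    exact h.1 (hci.antisymm (hi.2 hc))
  by_cases ha : a ∈ l <;> by_cases hb : b ∈ l
  · exact .inr (.inr (.inr (hl.eq_of_mem_iff (by grind) (by grind))))
  · exact .inr (.inl (hl.eq_of_mem_iff (by grind) (by grind)))
  · exact .inr (.inr (.inl (hl.eq_of_mem_iff (by grind) (by grind))))
  · exact .inl (hl.eq_of_mem_iff (by grind) (by grind))

theorem pathsThrough_subset_zeroSimplePaths {i j : Fin n} (hi : IsLeast {c | c ∈ l} i)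
    (hj : IsGreatest {c | c ∈ l} j) : pathsThrough m l 0 ⊆ zeroSimplePaths r m i j := by
  rintro p ⟨hp, rfl⟩
  exact mem_zeroSimplePaths.2 ⟨hp, hi, hj⟩

theorem mem_kStepPaths {k : ℕ} {i j : Fin n} :
    p ∈ kStepPaths r m k i j ↔ p ∈ zeroSimplePaths r m i j ∧ (itinerary p).length = k + 1 := by
  have hlength (h : p ≠ []) (hp : ZeroSimple n r m p) :=
    kStep_iff_length_itinerary (zeroSimple_iff_mem_returnPaths.1 hp).2.1 h (k := k)
  simp only [kStepPaths, zeroSimplePaths, Set.mem_ofPred_eq]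
  grind

theorem disjoint_pathsThrough {l l' : List (Fin n)} (h : l ≠ l') (x : ZMod r) :
    Disjoint (pathsThrough m l x) (pathsThrough m l' x) :=
  Set.disjoint_left.2 fun _ hp hp' => h (hp.2.symm.trans hp'.2)

section Consecutive

variable {i a b j : Fin n}

theorem zeroSimplePaths_eq_union (hia : i ⋖ a) (hab : a ⋖ b) (hbj : b ⋖ j) :
    zeroSimplePaths r m i j = pathsThrough m [i, j] 0 ∪ (pathsThrough m [i, a, j] 0 ∪
      (pathsThrough m [i, b, j] 0 ∪ pathsThrough m [i, a, b, j] 0)) := by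
  have hia' := hia.lt
  have hab' := hab.lt
  have hbj' := hbj.lt
  refine Set.Subset.antisymm (fun p hp => ?_) ?_
  · obtain ⟨hp, hi, hj⟩ := mem_zeroSimplePaths.1 hp
    exact (eq_or_of_isLeast_of_isGreatest hia hab hbj (sortedLT_itinerary hp.2.1) hi hj).imp
      (⟨hp, ·⟩) (.imp (⟨hp, ·⟩) (.imp (⟨hp, ·⟩) (⟨hp, ·⟩)))
  · simp only [Set.union_subset_iff]
    refine ⟨?_, ?_, ?_, ?_⟩ <;> refine pathsThrough_subset_zeroSimplePaths ?_ ?_ <;>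
      simp only [IsLeast, IsGreatest, lowerBounds, upperBounds, Set.mem_ofPred_eq] <;> grind

theorem kStepPaths_three_eq (hia : i ⋖ a) (hab : a ⋖ b) (hbj : b ⋖ j) :
    kStepPaths r m 3 i j = pathsThrough m [i, a, b, j] 0 := by
  ext p
  rw [mem_kStepPaths, zeroSimplePaths_eq_union hia hab hbj]
  constructor
  · rintro ⟨⟨-, hit⟩ | ⟨-, hit⟩ | ⟨-, hit⟩ | hp, hlength⟩
    · simp [hit] at hlength
    · simp [hit] at hlength
    · simp [hit] at hlength
    · exact hp
  · intro hp
    exact ⟨.inr (.inr (.inr hp)), congrArg List.length hp.2⟩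

theorem ncard_zeroSimplePaths_eq_add [NeZero r] (hia : i ⋖ a) (hab : a ⋖ b) (hbj : b ⋖ j)
    (hi : IsUnit (m i : ZMod r)) (ha : IsUnit (m a : ZMod r)) (hb : IsUnit (m b : ZMod r))
    (hj : IsUnit (m j : ZMod r)) :
    (zeroSimplePaths r m i j).ncard = r ^ 2 + (kStepPaths r m 3 i j).ncard := by
  have hia' := hia.lt
  have hab' := hab.lt
  have hbj' := hbj.lt
  have hdisj {l l' : List (Fin n)} (h : l ≠ l') := disjoint_pathsThrough (m := m) h (0 : ZMod r)
  rw [← add_two_mul_choose_two, two_mul, kStepPaths_three_eq hia hab hbj,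
    zeroSimplePaths_eq_union hia hab hbj, Set.ncard_def, Set.ncard_def,
    Set.encard_union_eq, Set.encard_union_eq, Set.encard_union_eq,
    encard_pathsThrough_pair (hia'.trans (hab'.trans hbj')) hi hj,
    encard_pathsThrough_triple hia' (hab'.trans hbj') hi ha hj,
    encard_pathsThrough_triple (hia'.trans hab') hbj' hi hb hj,
    encard_pathsThrough_quadruple hia' hab' hbj' hi ha hb hj]
  · norm_cast
    simp only [ENat.toNat_natCast]
    ring
  all_goals grind [Set.disjoint_union_right]

theorem natCast_ncard_kStepPaths_three [NeZero r] (hia : i ⋖ a) (hab : a ⋖ b) (hbj : b ⋖ j)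
    (hi : IsUnit (m i : ZMod r)) (ha : IsUnit (m a : ZMod r)) (hb : IsUnit (m b : ZMod r))
    (hj : IsUnit (m j : ZMod r)) {c : ℤ} (hc : 3 * c = (r : ℤ) * (r - 1) * (r - 2)) :
    ((kStepPaths r m 3 i j).ncard : ZMod r) = -((m b : ZMod r)⁻¹ * m a * c) := by
  rw [kStepPaths_three_eq hia hab hbj,
    natCast_ncard_pathsThrough_quadruple hia.lt hab.lt hbj.lt hi ha hb hj,
    natCast_choose_three_eq_neg hc, mul_neg]

end Consecutive

end QL

open QL in
theorem stmt19_general {n r : ℕ} (hr : 0 < r) (m : Fin n → ℕ) {i a b j : Fin n} (hia : i ⋖ a)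
    (hab : a ⋖ b) (hbj : b ⋖ j) (hgcd : ∀ q ∈ Set.Icc i j, Nat.gcd (m q) r = 1) (minv : ℤ)
    (hminv : minv * (m b : ℤ) ≡ 1 [ZMOD (r : ℤ)])
    (c : ℤ) (hc : 3 * c = (r : ℤ) * ((r : ℤ) - 1) * ((r : ℤ) - 2)) :
    ((Nat.card {p : List (Edge n r) // ∃ h : p ≠ [], ZeroSimple n r m p ∧
        KStep n r 3 p ∧ esrc n r m (p.head h) = (i, 0) ∧
        ern n r (p.getLast h) = (j, 0)} : ℤ)
      ≡ -(minv * (m a : ℤ) * c) [ZMOD (r : ℤ)]) ∧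
    ((Nat.card {p : List (Edge n r) // ∃ h : p ≠ [], ZeroSimple n r m p ∧
        esrc n r m (p.head h) = (i, 0) ∧
        ern n r (p.getLast h) = (j, 0)} : ℤ)
      ≡ -(minv * (m a : ℤ) * c) [ZMOD (r : ℤ)]) := by
  have : NeZero r := ⟨hr.ne'⟩
  have hunit (q : Fin n) (hq : q ∈ Set.Icc i j) : IsUnit (m q : ZMod r) :=
    (ZMod.isUnit_iff_coprime _ _).2 (hgcd q hq)
  have hi := hunit i ⟨le_rfl, hia.le.trans (hab.le.trans hbj.le)⟩
  have ha := hunit a ⟨hia.le, hab.le.trans hbj.le⟩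
  have hb := hunit b ⟨hia.le.trans hab.le, hbj.le⟩
  have hj := hunit j ⟨hia.le.trans (hab.le.trans hbj.le), le_rfl⟩
  have hinv : (m b : ZMod r)⁻¹ = minv :=
    hb.mul_right_cancel ((ZMod.inv_mul_of_unit _ hb).trans
      (mod_cast ((ZMod.intCast_eq_intCast_iff _ _ r).2 hminv).symm))
  have hthree : ((kStepPaths r m 3 i j).ncard : ZMod r) = -(minv * m a * c) :=
    hinv ▸ natCast_ncard_kStepPaths_three hia hab hbj hi ha hb hj hc
  have htotal : ((zeroSimplePaths r m i j).ncard : ZMod r) = (kStepPaths r m 3 i j).ncard := by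
    simp [ncard_zeroSimplePaths_eq_add hia hab hbj hi ha hb hj]
  simp only [← ZMod.intCast_eq_intCast_iff]
  push_cast
  exact ⟨hthree, htotal.trans hthree⟩

open QL in
/-- Lemma `l:PathsQuantum` (iii): in `L_{2n−1} ×_m ℤ_r`, the number of
`3`-step `0`-simple paths from `(v_i,0)` to `(v_{i+3},0)` is congruent to
`−m_{i+2}⁻¹ m_{i+1} · r(r−1)(r−2)/3` modulo `r`; consequently so is the total number
of `0`-simple paths from `(v_i,0)` to `(v_{i+3},0)`. -/
theorem stmt19 (n r : ℕ) (hr : 2 ≤ r) (m : Fin n → ℕ) (hm : ∀ i, 0 < m i)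
    (hgcd : ∀ i, Nat.gcd (m i) r = 1)
    (i : Fin n) (hi : (i : ℕ) + 3 < n)
    (minv : ℤ)
    (hminv : minv * (m ⟨(i : ℕ) + 2, by omega⟩ : ℤ) ≡ 1 [ZMOD (r : ℤ)])
    (c : ℤ) (hc : 3 * c = (r : ℤ) * ((r : ℤ) - 1) * ((r : ℤ) - 2)) :
    ((Nat.card {p : List (Edge n r) // ∃ h : p ≠ [], ZeroSimple n r m p ∧
        KStep n r 3 p ∧ esrc n r m (p.head h) = (i, 0) ∧
        ern n r (p.getLast h) = (⟨(i : ℕ) + 3, hi⟩, 0)} : ℤ)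
      ≡ -(minv * (m ⟨(i : ℕ) + 1, by omega⟩ : ℤ) * c) [ZMOD (r : ℤ)]) ∧
    ((Nat.card {p : List (Edge n r) // ∃ h : p ≠ [], ZeroSimple n r m p ∧
        esrc n r m (p.head h) = (i, 0) ∧
        ern n r (p.getLast h) = (⟨(i : ℕ) + 3, hi⟩, 0)} : ℤ)
      ≡ -(minv * (m ⟨(i : ℕ) + 1, by omega⟩ : ℤ) * c) [ZMOD (r : ℤ)]) := by
  exact stmt19_general (by omega) m (by simp) (by simp) (by simp) (fun q _ => hgcd q)
    minv hminv c hc
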